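/- For every number of prisoners n with 1 ≤ n ≤ 4, every number of rooms r ≥ 1 and every number of states q ≥ 3, the n prisoners have a winning strategy for r rooms with q states. -/

import Mathlib

namespace PrisonersGame

/-- A deterministic strategy for a prisoner: given the list of states observed
on previous visits and the state observed on the current visit, return the
state to leave the room in and whether to declare. -/
def Strategy : Type := List ℕ → ℕ → ℕ × Bool

/-- A strategy is valid for `q` states if, whenever all states observed so far
are among `0, …, q-1`, the state it leaves the room in is among `0, …, q-1`. -/
def Strategy.ValidFor (q : ℕ) (σ : Strategy) : Prop :=
  ∀ (h : List ℕ) (s : ℕ), (∀ x ∈ h, x < q) → s < q → (σ h s).1 < q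

/-- A schedule: at each time step, one prisoner is led into one room. -/
def Schedule (n r : ℕ) : Type := ℕ → Fin n × Fin r

/-- A schedule is fair if every prisoner is led into every room infinitely often. -/
def Schedule.Fair {n r : ℕ} (sched : Schedule n r) : Prop :=
  ∀ (p : Fin n) (room : Fin r), {t : ℕ | sched t = (p, room)}.Infinite

/-- The state of play just before step `t`: the current states of the rooms, and
the list of states observed so far by each prisoner. All rooms start in state `0`. -/
def run {n r : ℕ} (strat : Fin n → Strategy) (sched : Schedule n r) :
    ℕ → (Fin r → ℕ) × (Fin n → List ℕ)
  | 0 => (fun _ => 0, fun _ => [])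
  | t + 1 =>
      let prev := run strat sched t
      let p := (sched t).1
      let room := (sched t).2
      let obs := prev.1 room
      (Function.update prev.1 room (strat p (prev.2 p) obs).1,
        Function.update prev.2 p (prev.2 p ++ [obs]))

/-- The prisoner visiting at step `t` declares during that visit. -/
def declaresAt {n r : ℕ} (strat : Fin n → Strategy) (sched : Schedule n r)
    (t : ℕ) : Prop :=
  (strat (sched t).1 ((run strat sched t).2 (sched t).1)
      ((run strat sched t).1 (sched t).2)).2 = true

/-- Every prisoner has visited every room by step `t` (inclusive). -/
def allVisitedBy {n r : ℕ} (sched : Schedule n r) (t : ℕ) : Prop :=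
  ∀ (p : Fin n) (room : Fin r), ∃ s ≤ t, sched s = (p, room)

/-- A strategy profile is winning if, for every fair schedule, some prisoner
eventually declares, and no prisoner ever declares at a time before every
prisoner has visited every room. -/
def Winning {n r : ℕ} (strat : Fin n → Strategy) : Prop :=
  ∀ sched : Schedule n r, sched.Fair →
    (∃ t, declaresAt strat sched t) ∧
    ∀ t, declaresAt strat sched t → allVisitedBy sched t

/-- `n` prisoners have a winning strategy for `r` rooms with `q` states. -/
def HasWinningStrategy (n r q : ℕ) : Prop :=
  ∃ strat : Fin n → Strategy, (∀ p, (strat p).ValidFor q) ∧ Winning (n := n) (r := r) strat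

/-- `n` prisoners have a symmetric winning strategy (all prisoners use the
same strategy) for `r` rooms with `q` states. -/
def HasSymmetricWinningStrategy (n r q : ℕ) : Prop :=
  ∃ σ : Strategy, σ.ValidFor q ∧ Winning (n := n) (r := r) (fun _ => σ)

end PrisonersGame

/-!
A prisoner can play two roles of a profile on each visit, so it suffices to treat four prisoners.
They execute straight-line programs of instructions `(a, b)`: wait for a room in state `a` and leave
it in state `b`. The number of rooms in each state is then determined by how many instructions each
prisoner has executed, so that questions of deadlock and synchronisation become linear arithmetic.

First prisoner `0` turns all rooms from `0` to `1`, and each other prisoner turns `r` times a room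
from `1` to `2`, which `0` undoes. When `0` has counted all of these, every room is in state `1`,
`0` has visited all rooms, and all others have finished this phase without having to be told. With a
single room, this suffices.

Afterwards a marked room serves as a starting signal: as it is the only one in its state, a prisoner
who has acted in it has only the rooms in the other states left to visit. For `r ≥ 3`, prisoner `1`
first waits in the marked room for `2` and `3`, who then bring all rooms, one after the other, into
the state for which `1` waits. When all rooms are back in state `1`, prisoner `1` marks a room, and
in turn `2` and `3` change the states of all other rooms. For `r = 2`, it is enough that `1`, `2`
and `3` act in the marked room and then in the other one.
-/

namespace PrisonersGame

section Roles

variable {n m r q : ℕ} {strat : Fin n → Strategy} {f : Fin n → Fin m} {a b : Fin m → Fin n}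

/-- The effect of a visit of prisoner `v` on the pair of the state of the visited room and the
histories of all prisoners. -/
def visitAs (strat : Fin n → Strategy) (v : Fin n) (x : ℕ × (Fin n → List ℕ)) :
    ℕ × (Fin n → List ℕ) :=
  ((strat v (x.2 v) x.1).1, Function.update x.2 v (x.2 v ++ [x.1]))

/-- The effect of a visit of `p`, who plays first the role `a p` and then the role `b p`. -/
def visitTwice (strat : Fin n → Strategy) (a b : Fin m → Fin n) (p : Fin m)
    (x : ℕ × (Fin n → List ℕ)) : ℕ × (Fin n → List ℕ) :=
  visitAs strat (b p) (visitAs strat (a p) x)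

/-- The histories that prisoner `p`, having observed `h`, attributes to the roles played by `p`
(only the entries at `a p` and `b p` are meaningful). -/
def memory (strat : Fin n → Strategy) (a b : Fin m → Fin n) (p : Fin m) (h : List ℕ) :
    Fin n → List ℕ :=
  h.foldl (fun H s => (visitTwice strat a b p (s, H)).2) (fun _ => [])

/-- The strategy of `p` playing on every visit first the role `a p` and then the role `b p` of the
profile `strat`, declaring as soon as one of the roles does. -/
def mergedStrategy (strat : Fin n → Strategy) (a b : Fin m → Fin n) (p : Fin m) : Strategy :=
  fun h s =>
    let x := (s, memory strat a b p h)
    let y := visitAs strat (a p) x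
    ((visitTwice strat a b p x).1,
      (strat (a p) (x.2 (a p)) x.1).2 || (strat (b p) (y.2 (b p)) y.1).2)

/-- The schedule in which each visit of `p` is replaced by a visit of `a p` followed by a visit of
`b p` to the same room. -/
def doubledSchedule (a b : Fin m → Fin n) (sched : Schedule m r) : Schedule n r :=
  fun t => (if t % 2 = 0 then a (sched (t / 2)).1 else b (sched (t / 2)).1, (sched (t / 2)).2)

lemma doubledSchedule_even (sched : Schedule m r) (t : ℕ) :
    doubledSchedule a b sched (2 * t) = (a (sched t).1, (sched t).2) := by
  simp [doubledSchedule]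

lemma doubledSchedule_odd (sched : Schedule m r) (t : ℕ) :
    doubledSchedule a b sched (2 * t + 1) = (b (sched t).1, (sched t).2) := by
  have half : (2 * t + 1) / 2 = t := by omega
  simp [doubledSchedule, half, Nat.add_mod]

lemma doubledSchedule_fair (hab : ∀ v, a (f v) = v ∨ b (f v) = v) {sched : Schedule m r}
    (fair : sched.Fair) : (doubledSchedule a b sched).Fair := by
  intro v i
  rcases hab v with hv | hv
  · refine ((fair (f v) i).image (f := fun t => 2 * t) fun _ _ _ _ h => by simpa using h).mono ?_
    rintro _ ⟨t, ht, rfl⟩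
    simp [doubledSchedule_even, show sched t = _ from ht, hv]
  · refine ((fair (f v) i).image (f := fun t => 2 * t + 1)
      fun _ _ _ _ h => by simpa using h).mono ?_
    rintro _ ⟨t, ht, rfl⟩
    simp [doubledSchedule_odd, show sched t = _ from ht, hv]

lemma allVisitedBy_of_doubledSchedule (hfa : ∀ p, f (a p) = p) (hfb : ∀ p, f (b p) = p)
    {sched : Schedule m r} {t t' : ℕ} (ht : t' ≤ 2 * t + 1)
    (h : allVisitedBy (doubledSchedule a b sched) t') : allVisitedBy sched t := by
  intro p i
  obtain ⟨s, hs, visit⟩ := h (a p) i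
  obtain ⟨role, room⟩ := Prod.ext_iff.mp visit
  refine ⟨s / 2, by omega, Prod.ext ?_ room⟩
  have fibre := congrArg f role
  dsimp only [doubledSchedule] at fibre
  split_ifs at fibre <;> simpa only [hfa, hfb] using fibre

lemma run_succ (strat : Fin n → Strategy) (sched : Schedule n r) (t : ℕ) :
    run strat sched (t + 1) =
      (Function.update (run strat sched t).1 (sched t).2
        (visitAs strat (sched t).1 ((run strat sched t).1 (sched t).2, (run strat sched t).2)).1,
      (visitAs strat (sched t).1 ((run strat sched t).1 (sched t).2, (run strat sched t).2)).2) :=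
  rfl

lemma run_doubledSchedule_succ (strat : Fin n → Strategy) (sched : Schedule m r) (t : ℕ) :
    let before := run strat (doubledSchedule a b sched) (2 * t)
    let after := visitTwice strat a b (sched t).1 (before.1 (sched t).2, before.2)
    run strat (doubledSchedule a b sched) (2 * (t + 1)) =
      (Function.update before.1 (sched t).2 after.1, after.2) := by
  simp only [Nat.mul_succ, run_succ, doubledSchedule_even, doubledSchedule_odd,
    Function.update_self, Function.update_idem, visitTwice]

/-- The same room state, and the same histories of the prisoners in `S`. -/
def AgreeOn (S : Set (Fin n)) (x y : ℕ × (Fin n → List ℕ)) : Prop :=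
  x.1 = y.1 ∧ S.EqOn x.2 y.2

lemma AgreeOn.visitAs {S : Set (Fin n)} {v : Fin n} (hv : v ∈ S) {x y : ℕ × (Fin n → List ℕ)}
    (h : AgreeOn S x y) : AgreeOn S (visitAs strat v x) (visitAs strat v y) := by
  refine ⟨by simp only [PrisonersGame.visitAs, h.1, h.2 hv], fun u hu => ?_⟩
  simp only [PrisonersGame.visitAs, Function.update_apply, h.1, h.2 hv, h.2 hu]

lemma AgreeOn.visitTwice (hfa : ∀ p, f (a p) = p) (hfb : ∀ p, f (b p) = p) {p : Fin m}
    {x y : ℕ × (Fin n → List ℕ)} (h : AgreeOn (f ⁻¹' {p}) x y) :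
    AgreeOn (f ⁻¹' {p}) (visitTwice strat a b p x) (visitTwice strat a b p y) :=
  AgreeOn.visitAs (show b p ∈ f ⁻¹' {p} from hfb p)
    (AgreeOn.visitAs (show a p ∈ f ⁻¹' {p} from hfa p) h)

lemma visitTwice_of_ne (hfa : ∀ p, f (a p) = p) (hfb : ∀ p, f (b p) = p) {p : Fin m} {v : Fin n}
    (hv : f v ≠ p) (x : ℕ × (Fin n → List ℕ)) : (visitTwice strat a b p x).2 v = x.2 v := by
  have ha : v ≠ a p := fun h => hv (h ▸ hfa p)
  have hb : v ≠ b p := fun h => hv (h ▸ hfb p)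
  simp only [visitTwice, visitAs, Function.update_of_ne ha, Function.update_of_ne hb]

lemma memory_append (p : Fin m) (h : List ℕ) (s : ℕ) :
    memory strat a b p (h ++ [s]) = (visitTwice strat a b p (s, memory strat a b p h)).2 := by
  simp only [memory, List.foldl_append, List.foldl_cons, List.foldl_nil]

lemma run_doubledSchedule (hfa : ∀ p, f (a p) = p) (hfb : ∀ p, f (b p) = p)
    (sched : Schedule m r) (t : ℕ) :
    let merged := run (mergedStrategy strat a b) sched t
    let doubled := run strat (doubledSchedule a b sched) (2 * t)
    doubled.1 = merged.1 ∧
      ∀ p, (f ⁻¹' {p}).EqOn doubled.2 (memory strat a b p (merged.2 p)) := by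
  induction t with
  | zero => exact ⟨rfl, fun _ _ _ => rfl⟩
  | succ t ih =>
    rw [run_doubledSchedule_succ, run_succ]
    generalize run (mergedStrategy strat a b) sched t = merged at ih ⊢
    generalize run strat (doubledSchedule a b sched) (2 * t) = doubled at ih ⊢
    obtain ⟨p, i⟩ := sched t
    obtain ⟨rooms, histories⟩ := ih
    have visit : AgreeOn (f ⁻¹' {p}) (visitTwice strat a b p (doubled.1 i, doubled.2))
        (visitTwice strat a b p (merged.1 i, memory strat a b p (merged.2 p))) :=
      AgreeOn.visitTwice hfa hfb ⟨congrFun rooms i, histories p⟩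
    refine ⟨congrArg₂ (fun R s => Function.update R i s) rooms visit.1, fun p' v hv => ?_⟩
    by_cases hp : p' = p
    · subst hp
      simpa only [visitAs, Function.update_self, memory_append] using visit.2 hv
    · have absent : f v ≠ p := fun h => hp (hv.symm.trans h)
      simpa only [visitAs, Function.update_of_ne hp, visitTwice_of_ne hfa hfb absent]
        using histories p' hv

lemma declaresAt_mergedStrategy (hfa : ∀ p, f (a p) = p) (hfb : ∀ p, f (b p) = p)
    (sched : Schedule m r) (t : ℕ) :
    declaresAt (mergedStrategy strat a b) sched t ↔
      declaresAt strat (doubledSchedule a b sched) (2 * t) ∨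
        declaresAt strat (doubledSchedule a b sched) (2 * t + 1) := by
  obtain ⟨rooms, histories⟩ := run_doubledSchedule (strat := strat) hfa hfb sched t
  simp only [declaresAt, run_succ, doubledSchedule_even, doubledSchedule_odd, mergedStrategy,
    Bool.or_eq_true, Function.update_self]
  generalize run (mergedStrategy strat a b) sched t = merged at rooms histories ⊢
  generalize run strat (doubledSchedule a b sched) (2 * t) = doubled at rooms histories ⊢
  obtain ⟨p, i⟩ := sched t
  have first : AgreeOn (f ⁻¹' {p}) (visitAs strat (a p) (doubled.1 i, doubled.2))
      (visitAs strat (a p) (merged.1 i, memory strat a b p (merged.2 p))) :=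
    AgreeOn.visitAs (show a p ∈ f ⁻¹' {p} from hfa p) ⟨congrFun rooms i, histories p⟩
  rw [histories p (hfa p), first.1, first.2 (hfb p), rooms]

/-- All states occurring in `x` are valid. -/
def ValidStates (q : ℕ) (x : ℕ × (Fin n → List ℕ)) : Prop :=
  x.1 < q ∧ ∀ v, ∀ s ∈ x.2 v, s < q

lemma ValidStates.visitAs {v : Fin n} (valid : (strat v).ValidFor q) {x : ℕ × (Fin n → List ℕ)}
    (hx : ValidStates q x) : ValidStates q (visitAs strat v x) := by
  refine ⟨valid _ _ (hx.2 v) hx.1, fun u s hs => ?_⟩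
  by_cases huv : u = v
  · subst huv
    simp only [PrisonersGame.visitAs, Function.update_self, List.mem_append,
      List.mem_singleton] at hs
    rcases hs with hs | rfl
    exacts [hx.2 u s hs, hx.1]
  · simp only [PrisonersGame.visitAs, Function.update_of_ne huv] at hs
    exact hx.2 u s hs

lemma validStates_memory (valid : ∀ v, (strat v).ValidFor q) (p : Fin m) (h : List ℕ)
    (hh : ∀ s ∈ h, s < q) : ∀ v, ∀ s ∈ memory strat a b p h v, s < q := by
  induction h using List.reverseRecOn with
  | nil => simp [memory]
  | append_singleton h s ih =>
    have seen : ValidStates q (s, memory strat a b p h) :=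
      ⟨hh s (by simp), ih fun x hx => hh x (by simp [hx])⟩
    rw [memory_append]
    exact ((seen.visitAs (valid (a p))).visitAs (valid (b p))).2

lemma mergedStrategy_validFor (valid : ∀ v, (strat v).ValidFor q) (p : Fin m) :
    (mergedStrategy strat a b p).ValidFor q := by
  intro h s hh hs
  have seen : ValidStates q (s, memory strat a b p h) := ⟨hs, validStates_memory valid p h hh⟩
  exact ((seen.visitAs (valid (a p))).visitAs (valid (b p))).1

theorem HasWinningStrategy.of_roles (hfa : ∀ p, f (a p) = p) (hfb : ∀ p, f (b p) = p)
    (hab : ∀ v, a (f v) = v ∨ b (f v) = v) (h : HasWinningStrategy n r q) :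
    HasWinningStrategy m r q := by
  obtain ⟨strat, valid, win⟩ := h
  refine ⟨mergedStrategy strat a b, mergedStrategy_validFor valid, fun sched fair => ?_⟩
  obtain ⟨⟨t, ht⟩, sound⟩ := win _ (doubledSchedule_fair hab fair)
  constructor
  · refine ⟨t / 2, (declaresAt_mergedStrategy hfa hfb sched _).mpr ?_⟩
    rcases Nat.even_or_odd' t with ⟨k, rfl | rfl⟩
    · exact Or.inl (by simpa using ht)
    · exact Or.inr (by simpa [show (2 * k + 1) / 2 = k by omega] using ht)
  · intro t ht
    rcases (declaresAt_mergedStrategy hfa hfb sched t).mp ht with ht | ht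
    · exact allVisitedBy_of_doubledSchedule hfa hfb (Nat.le_succ _) (sound _ ht)
    · exact allVisitedBy_of_doubledSchedule hfa hfb le_rfl (sound _ ht)

theorem HasWinningStrategy.of_succ (h : HasWinningStrategy (m + 2) r q) :
    HasWinningStrategy (m + 1) r q := by
  refine h.of_roles (f := (Fin.last m).predAbove) (a := Fin.castSucc)
    (b := (Fin.last m).castSucc.succAbove) (fun _ => Fin.predAbove_last_castSucc)
    (Fin.predAbove_succAbove _) fun v => ?_
  by_cases hv : v = (Fin.last m).castSucc
  · subst hv
    exact Or.inl (by rw [Fin.predAbove_last_castSucc])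
  · exact Or.inr (Fin.succAbove_predAbove hv)

theorem HasWinningStrategy.of_le (hm : 1 ≤ m) (hmn : m ≤ n) (h : HasWinningStrategy n r q) :
    HasWinningStrategy m r q := by
  induction n, hmn using Nat.le_induction with
  | base => exact h
  | succ k hk ih =>
    obtain ⟨k, rfl⟩ := Nat.exists_eq_add_of_le' (hm.trans hk)
    exact ih h.of_succ

end Roles

/-- A program for a prisoner. The instruction `(a, b)` means: wait until led into a room in state
`a`, leave it in state `b`, and proceed to the next instruction. After the last instruction the
prisoner leaves all rooms unchanged. -/
abbrev Program : Type := List (ℕ × ℕ)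

/-- The state in which a prisoner about to execute the instruction with index `k` leaves a room
found in state `s`; it is `none` if the instruction does not apply. -/
def Program.response (P : Program) (k s : ℕ) : Option ℕ :=
  P[k]?.bind fun x => if x.1 = s then some x.2 else none

/-- The index of the next instruction after the observations `h`. -/
def Program.counter (P : Program) (h : List ℕ) : ℕ :=
  h.foldl (fun k s => if (P.response k s).isSome then k + 1 else k) 0

/-- The strategies executing the programs `prog`; the prisoner `w` declares on reaching the end of
the program. -/
def programStrategy {n : ℕ} (prog : Fin n → Program) (w v : Fin n) : Strategy := fun h s =>
  (((prog v).response ((prog v).counter h) s).getD s,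
    decide (v = w ∧ (prog v).counter (h ++ [s]) = (prog v).length))

/-- A state of play of programs: the states of the rooms, the indices of the next instructions, and
a set of pairs `(v, i)` such that `v` has visited the room `i`. -/
structure Config (n r : ℕ) where
  room : Fin r → ℕ
  pc : Fin n → ℕ
  visited : Set (Fin n × Fin r)

section Execution

variable {n r q s : ℕ} {prog : Fin n → Program} {w : Fin n} {V : Set (Fin n × Fin r)}
  {c c' : Config n r}

/-- The configuration after `v` executes an instruction in the room `i`, leaving it in state `b`. -/
def Config.act (c : Config n r) (v : Fin n) (i : Fin r) (b : ℕ) : Config n r :=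
  ⟨Function.update c.room i b, Function.update c.pc v (c.pc v + 1), insert (v, i) c.visited⟩

/-- The transition relation of the programs `prog`. Visits on which the prisoner merely waits are
not transitions. -/
def Step (prog : Fin n → Program) (c c' : Config n r) : Prop :=
  ∃ v i b, (prog v)[c.pc v]? = some (c.room i, b) ∧ c' = c.act v i b

/-- The configuration with all rooms in state `s`, in which the visits `V` have already taken
place and no instruction has been executed. -/
def start (s : ℕ) (V : Set (Fin n × Fin r)) : Config n r :=
  ⟨fun _ => s, 0, V⟩

/-- The programs `prog` can lead from `start s V` to the configuration `c`. -/
def Reachable (prog : Fin n → Program) (s : ℕ) (V : Set (Fin n × Fin r)) (c : Config n r) : Prop :=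
  Relation.ReflTransGen (Step prog) (start s V) c

/-- Started with all rooms in state `s` after the visits `V`, the programs `prog` never block
before `w` has completed the program, and then all visits have taken place. -/
def Solves (prog : Fin n → Program) (w : Fin n) (s : ℕ) (V : Set (Fin n × Fin r)) : Prop :=
  ∀ c, Reachable prog s V c →
    (c.pc w = (prog w).length → ∀ x, x ∈ c.visited) ∧
      (c.pc w < (prog w).length → ∃ c', Step prog c c')

lemma Reachable.pc_le_length (h : Reachable prog s V c) (v : Fin n) :
    c.pc v ≤ (prog v).length := by
  induction h with
  | refl => exact Nat.zero_le _
  | tail _ step ih =>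
    obtain ⟨u, i, b, instr, rfl⟩ := step
    by_cases huv : v = u
    · subst huv
      simpa only [Config.act, Function.update_self] using
        Nat.succ_le_of_lt (List.getElem?_eq_some_iff.mp instr).1
    · simpa only [Config.act, Function.update_of_ne huv] using ih

lemma Program.response_eq_some {P : Program} {k a b : ℕ} :
    P.response k a = some b ↔ P[k]? = some (a, b) := by
  simp only [Program.response, Option.bind_eq_some_iff, Option.ite_none_right_eq_some, Prod.exists,
    Option.some.injEq]
  grind

lemma Program.counter_append (P : Program) (h : List ℕ) (a : ℕ) :
    P.counter (h ++ [a]) =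
      if (P.response (P.counter h) a).isSome then P.counter h + 1 else P.counter h :=
  List.foldl_append

/-- The configuration after `v` is led into the room `i`. -/
def Config.visit (prog : Fin n → Program) (c : Config n r) (v : Fin n) (i : Fin r) : Config n r :=
  ((prog v).response (c.pc v) (c.room i)).elim c (c.act v i)

/-- The configuration just before step `t` of the schedule `sched`. -/
def configAt (prog : Fin n → Program) (sched : Schedule n r) : ℕ → Config n r
  | 0 => start 0 ∅
  | t + 1 => (configAt prog sched t).visit prog (sched t).1 (sched t).2

lemma Config.visit_of_getElem? {v : Fin n} {i : Fin r} {b : ℕ}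
    (h : (prog v)[c.pc v]? = some (c.room i, b)) : c.visit prog v i = c.act v i b := by
  rw [Config.visit, Program.response_eq_some.mpr h, Option.elim_some]

lemma Config.visit_eq_or_step (c : Config n r) (v : Fin n) (i : Fin r) :
    c.visit prog v i = c ∨ Step prog c (c.visit prog v i) := by
  cases h : (prog v).response (c.pc v) (c.room i) with
  | none => exact Or.inl (by rw [Config.visit, h, Option.elim_none])
  | some b =>
    have instr := Program.response_eq_some.mp h
    exact Or.inr ⟨v, i, b, instr, Config.visit_of_getElem? instr⟩

lemma reachable_configAt (prog : Fin n → Program) (sched : Schedule n r) (t : ℕ) :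
    Reachable prog 0 ∅ (configAt prog sched t) := by
  induction t with
  | zero => exact .refl
  | succ t ih =>
    rcases (configAt prog sched t).visit_eq_or_step (prog := prog) (sched t).1 (sched t).2
      with h | h
    · exact (congrArg (Reachable prog 0 ∅) h).mpr ih
    · exact ih.tail h

lemma Config.visited_visit_subset (c : Config n r) (v : Fin n) (i : Fin r) :
    (c.visit prog v i).visited ⊆ insert (v, i) c.visited := by
  rw [Config.visit]
  cases (prog v).response (c.pc v) (c.room i)
  exacts [Set.subset_insert _ _, subset_rfl]

lemma exists_visit_of_mem_visited {sched : Schedule n r} {t : ℕ} {x : Fin n × Fin r}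
    (hx : x ∈ (configAt prog sched t).visited) : ∃ t' < t, sched t' = x := by
  induction t with
  | zero => exact hx.elim
  | succ t ih =>
    rcases Config.visited_visit_subset _ _ _ hx with rfl | hx
    · exact ⟨t, t.lt_succ_self, rfl⟩
    · obtain ⟨t', ht', h⟩ := ih hx
      exact ⟨t', ht'.trans t.lt_succ_self, h⟩

lemma run_programStrategy (w : Fin n) (sched : Schedule n r) (t : ℕ) :
    (run (programStrategy prog w) sched t).1 = (configAt prog sched t).room ∧
      ∀ v, (prog v).counter ((run (programStrategy prog w) sched t).2 v) =
        (configAt prog sched t).pc v := by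
  induction t with
  | zero => exact ⟨rfl, fun _ => rfl⟩
  | succ t ih =>
    rw [run_succ, configAt]
    generalize run (programStrategy prog w) sched t = played at ih ⊢
    generalize configAt prog sched t = c at ih ⊢
    obtain ⟨v, i⟩ := sched t
    obtain ⟨rooms, counters⟩ := ih
    simp only [visitAs, programStrategy, rooms, counters]
    cases h : (prog v).response (c.pc v) (c.room i) with
    | none =>
      simp only [Config.visit, h, Option.elim_none, Option.getD_none]
      refine ⟨Function.update_eq_self i c.room, fun u => ?_⟩
      by_cases hu : u = v
      · subst hu
        simp [Program.counter_append, counters, h]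
      · rw [Function.update_of_ne hu, counters]
    | some b =>
      simp only [Config.visit, h, Option.elim_some, Option.getD_some, Config.act, true_and]
      intro u
      by_cases hu : u = v
      · subst hu
        simp [Program.counter_append, counters, h]
      · rw [Function.update_of_ne hu, Function.update_of_ne hu, counters]

lemma declaresAt_programStrategy (w : Fin n) (sched : Schedule n r) (t : ℕ) :
    declaresAt (programStrategy prog w) sched t ↔
      (sched t).1 = w ∧ (configAt prog sched (t + 1)).pc w = (prog w).length := by
  have counter := (run_programStrategy (prog := prog) w sched (t + 1)).2 (sched t).1
  rw [run_succ] at counter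
  simp only [visitAs, Function.update_self] at counter
  simp only [declaresAt, programStrategy, decide_eq_true_eq, counter]
  exact and_congr_right fun h => by rw [h]

lemma programStrategy_validFor (hq : ∀ v, ∀ x ∈ prog v, x.2 < q) (w v : Fin n) :
    (programStrategy prog w v).ValidFor q := by
  intro h a _ ha
  rw [programStrategy]
  cases hb : (prog v).response ((prog v).counter h) a with
  | none => exact ha
  | some b => exact hq v _ (List.mem_of_getElem? (Program.response_eq_some.mp hb))

lemma Config.pc_visit_mono (c : Config n r) (v : Fin n) (i : Fin r) :
    c.pc ≤ (c.visit prog v i).pc := by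
  rw [Config.visit]
  cases (prog v).response (c.pc v) (c.room i)
  exacts [le_rfl, le_update_iff.mpr ⟨Nat.le_succ _, fun _ _ => le_rfl⟩]

lemma monotone_pc_configAt (prog : Fin n → Program) (sched : Schedule n r) :
    Monotone fun t => (configAt prog sched t).pc :=
  monotone_nat_of_le_succ fun _ => Config.pc_visit_mono _ _ _

lemma Config.pc_act_ne (c : Config n r) (v : Fin n) (i : Fin r) (b : ℕ) :
    (c.act v i b).pc ≠ c.pc := fun h => by
  have stays := congrFun h v
  simp only [Config.act, Function.update_self] at stays
  omega

lemma exists_forall_ge_configAt_eq (prog : Fin n → Program) (sched : Schedule n r) :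
    ∃ N, ∀ t ≥ N, configAt prog sched t = configAt prog sched N := by
  have mono : Monotone fun t => ∑ v, (configAt prog sched t).pc v := fun t t' h =>
    Finset.sum_le_sum fun v _ => monotone_pc_configAt prog sched h v
  obtain ⟨total, N, hN⟩ := converges_of_monotone_of_bounded mono fun t =>
    Finset.sum_le_sum fun v _ => (reachable_configAt prog sched t).pc_le_length v
  refine ⟨N, fun t ht => ?_⟩
  induction t, ht using Nat.le_induction with
  | base => rfl
  | succ t ht ih =>
    rcases (configAt prog sched t).visit_eq_or_step (prog := prog) (sched t).1 (sched t).2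
      with h | ⟨v, i, b, -, h⟩
    · exact h.trans ih
    · have constant : (configAt prog sched t).pc = (configAt prog sched (t + 1)).pc := by
        have total_eq := (hN t ht).trans (hN (t + 1) (by omega)).symm
        have le := monotone_pc_configAt prog sched t.le_succ
        exact funext fun u =>
          (Finset.sum_eq_sum_iff_of_le fun u _ => le u).mp total_eq u (Finset.mem_univ u)
      exact absurd ((congrArg Config.pc h).symm.trans constant.symm) (Config.pc_act_ne _ _ _ _)

lemma exists_configAt_pc_eq_length (h : Solves prog w 0 (∅ : Set (Fin n × Fin r)))
    {sched : Schedule n r} (fair : sched.Fair) :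
    ∃ N, ∀ t ≥ N, (configAt prog sched t).pc w = (prog w).length := by
  obtain ⟨N, stationary⟩ := exists_forall_ge_configAt_eq prog sched
  have reach := reachable_configAt prog sched N
  refine ⟨N, fun t ht => by_contra fun unfinished => ?_⟩
  rw [stationary t ht] at unfinished
  obtain ⟨_, v, i, b, instr, -⟩ := (h _ reach).2 ((reach.pc_le_length w).lt_of_ne unfinished)
  obtain ⟨t', visit, ht'⟩ := (fair v i).exists_gt N
  have step : configAt prog sched (t' + 1) = (configAt prog sched N).act v i b := by
    rw [configAt, show sched t' = (v, i) from visit, stationary t' ht'.le,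
      Config.visit_of_getElem? instr]
  rw [stationary (t' + 1) (by omega)] at step
  exact Config.pc_act_ne _ v i b (congrArg Config.pc step).symm

theorem Solves.hasWinningStrategy (hq : ∀ v, ∀ x ∈ prog v, x.2 < q)
    (h : Solves prog w 0 (∅ : Set (Fin n × Fin r))) : HasWinningStrategy n r q := by
  refine ⟨programStrategy prog w, programStrategy_validFor hq w, fun sched fair => ⟨?_, ?_⟩⟩
  · obtain ⟨N, finished⟩ := exists_configAt_pc_eq_length h fair
    obtain ⟨t, visit, ht⟩ := (fair w (sched 0).2).exists_gt N
    exact ⟨t, (declaresAt_programStrategy w sched t).mpr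
      ⟨congrArg Prod.fst visit, finished (t + 1) (by omega)⟩⟩
  · intro t ht p i
    have finished := ((declaresAt_programStrategy w sched t).mp ht).2
    obtain ⟨t', ht', visit⟩ := exists_visit_of_mem_visited
      ((h _ (reachable_configAt prog sched (t + 1))).1 finished (p, i))
    exact ⟨t', Nat.lt_succ_iff.mp ht', visit⟩

end Execution

section Composition

variable {n r s s' : ℕ} {pre post : Fin n → Program} {l w : Fin n} {V : Set (Fin n × Fin r)}
  {P : Set (Fin n × Fin r) → Prop} {c c' : Config n r}

/-- The programs `pre`, started with all rooms in state `s` after the visits `V`, can be followed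
by the programs `post`: `pre` never blocks before `l` has completed the program, until then the
first instruction of `post` applies in no room to a prisoner who is already waiting for it, and
when `l` has finished, so has everybody else, all rooms are in state `s'`, and the visits satisfy
`P`. -/
structure Handover (pre post : Fin n → Program) (l : Fin n) (s : ℕ) (V : Set (Fin n × Fin r))
    (s' : ℕ) (P : Set (Fin n × Fin r) → Prop) : Prop where
  progress : ∀ c, Reachable pre s V c → c.pc l < (pre l).length → ∃ c', Step pre c c'
  asleep : ∀ c, Reachable pre s V c → c.pc l < (pre l).length → ∀ v ≠ l,
    c.pc v = (pre v).length → ∀ x ∈ (post v)[0]?, ∀ i, c.room i ≠ x.1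
  finished : ∀ c, Reachable pre s V c → c.pc l = (pre l).length →
    (∀ i, c.room i = s') ∧ (∀ v, c.pc v = (pre v).length) ∧ P c.visited

/-- The configuration `c` with the instruction indices increased by `k`. -/
def Config.delay (k : Fin n → ℕ) (c : Config n r) : Config n r :=
  ⟨c.room, k + c.pc, c.visited⟩

lemma Config.act_delay (k : Fin n → ℕ) (v : Fin n) (i : Fin r) (b : ℕ) :
    (c.delay k).act v i b = (c.act v i b).delay k := by
  simp only [Config.delay, Config.act, Config.mk.injEq, true_and, and_true]
  ext u
  by_cases huv : u = v
  · subst huv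
    simp [add_assoc]
  · simp [huv]

lemma step_append_delay_iff :
    Step (fun v => pre v ++ post v) (c.delay fun v => (pre v).length) c' ↔
      ∃ d, Step post c d ∧ c' = d.delay fun v => (pre v).length := by
  have lookup (v : Fin n) : (pre v ++ post v)[(c.delay fun v => (pre v).length).pc v]? =
      (post v)[c.pc v]? := by
    simp only [Config.delay, Pi.add_apply, List.getElem?_append_right (Nat.le_add_right _ _),
      Nat.add_sub_cancel_left]
  constructor
  · rintro ⟨v, i, b, instr, rfl⟩
    exact ⟨_, ⟨v, i, b, (lookup v).symm.trans instr, rfl⟩, c.act_delay _ v i b⟩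
  · rintro ⟨_, ⟨v, i, b, instr, rfl⟩, rfl⟩
    exact ⟨v, i, b, (lookup v).trans instr, (c.act_delay _ v i b).symm⟩

lemma Step.append_right (post : Fin n → Program) (h : Step pre c c') :
    Step (fun v => pre v ++ post v) c c' := by
  obtain ⟨v, i, b, instr, rfl⟩ := h
  have running := (List.getElem?_eq_some_iff.mp instr).1
  exact ⟨v, i, b, (List.getElem?_append_left running).trans instr, rfl⟩

namespace Handover

lemma step_of_step_append (h : Handover pre post l s V s' P) (reach : Reachable pre s V c)
    (running : c.pc l < (pre l).length) (step : Step (fun v => pre v ++ post v) c c') :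
    Step pre c c' := by
  obtain ⟨v, i, b, instr, rfl⟩ := step
  refine ⟨v, i, b, ?_, rfl⟩
  rcases (reach.pc_le_length v).lt_or_eq with hv | hv
  · rwa [List.getElem?_append_left hv] at instr
  · have v_ne : v ≠ l := fun h => running.ne (h ▸ hv)
    rw [List.getElem?_append_right hv.ge, hv, Nat.sub_self] at instr
    exact absurd rfl (h.asleep c reach running v v_ne hv _ instr i)

lemma running_or_finished (h : Handover pre post l s V s' P) (reach : Reachable pre s V c) :
    Reachable pre s V c ∧ c.pc l < (pre l).length ∨
      ∃ V' d, P V' ∧ Reachable post s' V' d ∧ c = d.delay fun v => (pre v).length := by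
  refine (reach.pc_le_length l).lt_or_eq.imp (And.intro reach) fun hl => ?_
  obtain ⟨rooms, counters, visits⟩ := h.finished c reach hl
  refine ⟨c.visited, start s' c.visited, visits, .refl, ?_⟩
  rw [start, Config.delay, add_zero, ← funext rooms, ← funext counters]

lemma reachable_append (h : Handover pre post l s V s' P)
    (reach : Reachable (fun v => pre v ++ post v) s V c) :
    Reachable pre s V c ∧ c.pc l < (pre l).length ∨
      ∃ V' d, P V' ∧ Reachable post s' V' d ∧ c = d.delay fun v => (pre v).length := by
  induction reach with
  | refl => exact h.running_or_finished .refl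
  | tail _ step ih =>
    rcases ih with ⟨before, running⟩ | ⟨V', d, visits, after, rfl⟩
    · exact h.running_or_finished (before.tail (h.step_of_step_append before running step))
    · obtain ⟨d', step', rfl⟩ := step_append_delay_iff.mp step
      exact Or.inr ⟨V', d', visits, after.tail step', rfl⟩

theorem solves_append (h : Handover pre post l s V s' P)
    (solves : ∀ V', P V' → Solves post w s' V') (hw : post w ≠ []) :
    Solves (fun v => pre v ++ post v) w s V := by
  intro c reach
  rw [List.length_append]
  rcases h.reachable_append reach with ⟨before, running⟩ | ⟨V', d, visits, after, rfl⟩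
  · have before_end := before.pc_le_length w
    have post_pos := List.length_pos_iff.mpr hw
    exact ⟨fun _ => by omega,
      fun _ => (h.progress c before running).imp fun _ step => step.append_right post⟩
  · have sound := solves V' visits d after
    refine ⟨fun hd => sound.1 (Nat.add_left_cancel hd), fun hd => ?_⟩
    obtain ⟨d', step⟩ := sound.2 (Nat.lt_of_add_lt_add_left hd)
    exact ⟨_, step_append_delay_iff.mpr ⟨d', step, rfl⟩⟩

theorem solves (h : Handover pre post l s V s' P) (visits : ∀ V', P V' → ∀ x, x ∈ V') :
    Solves pre l s V :=
  fun c reach => ⟨fun hl => visits _ (h.finished c reach hl).2.2, h.progress c reach⟩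

end Handover

end Composition

lemma sum_update_add {ι α M : Type*} [Fintype ι] [DecidableEq ι] [AddCommMonoid M] (F : ι → α → M)
    (f : ι → α) (i : ι) (x : α) :
    ∑ j, F j (Function.update f i x j) + F i (f i) = ∑ j, F j (f j) + F i x := by
  simp only [Function.apply_update (fun j => F j), Finset.sum_update_of_mem (Finset.mem_univ i),
    Finset.sum_eq_add_sum_sdiff_singleton_of_mem (Finset.mem_univ i) fun j => F j (f j)]
  ac_rfl

lemma getElem?_cons_eq_some {α : Type*} {k : ℕ} {x y : α} {l : List α} :
    (x :: l)[k]? = some y ↔ y = x ∧ k = 0 ∨ l[k - 1]? = some y ∧ 1 ≤ k := by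
  cases k <;> simp [eq_comm]

lemma getElem?_replicate_eq_some {α : Type*} {n k : ℕ} {x y : α} :
    (List.replicate n x)[k]? = some y ↔ y = x ∧ k < n := by
  simp only [List.getElem?_replicate, Option.ite_none_right_eq_some, Option.some.injEq, eq_comm,
    and_comm]

lemma getElem?_replicate_append_eq_some {α : Type*} {n k : ℕ} {x y : α} {l : List α} :
    (List.replicate n x ++ l)[k]? = some y ↔ y = x ∧ k < n ∨ l[k - n]? = some y ∧ n ≤ k := by
  rcases lt_or_ge k n with h | h
  · simp [List.getElem?_append, h, h.not_ge, eq_comm]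
  · simp [List.getElem?_append, h, h.not_gt]

lemma countP_take_cons {α : Type*} (p : α → Bool) (k : ℕ) (x : α) (l : List α) :
    ((x :: l).take k).countP p = (if p x then min k 1 else 0) + (l.take (k - 1)).countP p := by
  cases k <;> cases h : p x <;> simp [h, add_comm]

section Counting

variable {n r s a b x : ℕ} {R : Fin r → ℕ} {i j : Fin r} {prog : Fin n → Program}
  {V : Set (Fin n × Fin r)} {c : Config n r} {v : Fin n}

/-- The number of rooms in state `x`. -/
def count (R : Fin r → ℕ) (x : ℕ) : ℕ :=
  ∑ i, if R i = x then 1 else 0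

lemma count_eq_card (R : Fin r → ℕ) (x : ℕ) : count R x = Finset.card {i | R i = x} :=
  (Finset.card_filter _ _).symm

lemma exists_room_of_count_pos (h : 0 < count R x) : ∃ i, R i = x := by
  obtain ⟨i, hi⟩ := Finset.card_pos.mp (h.trans_eq (count_eq_card R x))
  exact ⟨i, (Finset.mem_filter.mp hi).2⟩

lemma room_ne_of_count_eq_zero (h : count R x = 0) (i : Fin r) : R i ≠ x := by
  rw [count_eq_card, Finset.card_eq_zero, Finset.filter_eq_empty_iff] at h
  exact h (Finset.mem_univ i)

lemma room_eq_of_count_eq (h : count R x = r) (i : Fin r) : R i = x := by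
  have full : Finset.card {i | R i = x} = Finset.card (Finset.univ : Finset (Fin r)) := by
    rw [← count_eq_card, h, Finset.card_fin]
  exact Finset.card_filter_eq_iff.mp full i (Finset.mem_univ i)

lemma eq_of_count_le_one (h : count R x ≤ 1) (hi : R i = x) (hj : R j = x) : i = j :=
  Finset.card_le_one.mp ((count_eq_card R x).symm.trans_le h) i (by simpa using hi) j
    (by simpa using hj)

@[elab_as_elim]
lemma Reachable.induction_act {motive : (c : Config n r) → Reachable prog s V c → Prop}
    (start : motive (start s V) .refl)
    (act : ∀ c v i b (reach : Reachable prog s V c)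
      (instr : (prog v)[c.pc v]? = some (c.room i, b)), motive c reach →
        motive (c.act v i b) (reach.tail ⟨v, i, b, instr, rfl⟩))
    (h : Reachable prog s V c) : motive c h := by
  induction h with
  | refl => exact start
  | tail reach step ih =>
    obtain ⟨v, i, b, instr, rfl⟩ := step
    exact act _ v i b reach instr ih

/-- Conservation of rooms: each executed instruction `(a, b)` destroys a room in state `a` and
creates one in state `b`. -/
lemma Reachable.count_room (h : Reachable prog s V c) (x : ℕ) :
    count c.room x + ∑ v, ((prog v).take (c.pc v)).countP (fun y => y.1 = x) =
      (if s = x then r else 0) + ∑ v, ((prog v).take (c.pc v)).countP (fun y => y.2 = x) := by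
  induction h using Reachable.induction_act with
  | start => by_cases h : s = x <;> simp [PrisonersGame.start, count, h]
  | act c v i b _ instr ih =>
    have rooms : count (Function.update c.room i b) x + _ = count c.room x + _ :=
      sum_update_add (fun _ y => if y = x then 1 else 0) c.room i b
    have destroyed := sum_update_add (fun v k => ((prog v).take k).countP fun y => y.1 = x)
      c.pc v (c.pc v + 1)
    have created := sum_update_add (fun v k => ((prog v).take k).countP fun y => y.2 = x)
      c.pc v (c.pc v + 1)
    simp only [List.take_add_one, instr, Option.toList_some, List.countP_append,
      List.countP_singleton, decide_eq_true_eq] at destroyed created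
    simp only [Config.act]
    omega

lemma Reachable.visited_subset (h : Reachable prog s V c) : V ⊆ c.visited := by
  induction h using Reachable.induction_act with
  | start => exact subset_rfl
  | act _ _ _ _ _ _ ih => exact ih.trans (Set.subset_insert _ _)

lemma Reachable.exists_visited (h : Reachable prog s V c) (hv : 0 < c.pc v) :
    ∃ i, (v, i) ∈ c.visited := by
  induction h using Reachable.induction_act with
  | start => exact absurd hv (lt_irrefl 0)
  | act c u i b _ _ ih =>
    by_cases huv : v = u
    · exact ⟨i, Or.inl (huv ▸ rfl)⟩
    · simp only [Config.act, Function.update_of_ne huv] at hv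
      exact (ih hv).imp fun _ => Or.inr

lemma Reachable.eq_start_or_pc_eq_one (h : Reachable prog s V c) (hv : (prog v).length = 1)
    (others : ∀ u ≠ v, ∀ x, (prog u)[0]? = some x → x.1 ≠ s) :
    c = start s V ∨ c.pc v = 1 := by
  induction h using Reachable.induction_act with
  | start => exact Or.inl rfl
  | act c u i b _ instr ih =>
    refine Or.inr ?_
    by_cases huv : u = v
    · subst huv
      have running := (List.getElem?_eq_some_iff.mp instr).1
      simp only [Config.act, Function.update_self]
      omega
    · rcases ih with rfl | ih
      · exact absurd rfl (others u huv _ instr)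
      · simpa only [Config.act, Function.update_of_ne (Ne.symm huv)] using ih

lemma pc_eq_one_of_pos (marked : c = start s V ∨ c.pc v = 1) {u : Fin n} (hu : 0 < c.pc u) :
    c.pc v = 1 :=
  marked.resolve_left fun h => (Nat.ne_of_gt hu) (congrFun (congrArg Config.pc h) u)

/-- The invariant behind all claims that `v` has visited every room: once `v` has reached the
instruction `k`, only `v` brings rooms into the set `M` of states. -/
lemma Reachable.mem_visited {M : Set ℕ} {k : ℕ} (hs : k = 0 → s ∉ M)
    (arrival : ∀ c i b, Reachable prog s V c → c.pc v + 1 = k →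
      (prog v)[c.pc v]? = some (c.room i, b) →
        ∀ j, (c.act v i b).room j ∈ M → (v, j) ∈ (c.act v i b).visited)
    (others : ∀ c u i b, Reachable prog s V c → k ≤ c.pc v → u ≠ v →
      (prog u)[c.pc u]? = some (c.room i, b) → b ∈ M → c.room i ∈ M)
    (h : Reachable prog s V c) (hk : k ≤ c.pc v) (hi : c.room i ∈ M) : (v, i) ∈ c.visited := by
  induction h using Reachable.induction_act with
  | start => exact absurd hi (hs (Nat.le_zero.mp hk))
  | act c u j b reach instr ih =>
    by_cases huv : u = v
    · subst huv
      rcases lt_or_ge (c.pc u) k with hc | hc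
      · simp only [Config.act, Function.update_self] at hk
        exact arrival c j b reach (by omega) instr i hi
      · by_cases hij : i = j
        · exact Or.inl (hij ▸ rfl)
        · simp only [Config.act, Function.update_of_ne hij] at hi
          exact Or.inr (ih hc hi)
    · simp only [Config.act, Function.update_of_ne (Ne.symm huv)] at hk
      by_cases hij : i = j
      · subst hij
        simp only [Config.act, Function.update_self] at hi
        exact Or.inr (ih hk (others c u i b reach hk huv instr hi))
      · simp only [Config.act, Function.update_of_ne hij] at hi
        exact Or.inr (ih hk hi)

lemma exists_step (instr : (prog v)[c.pc v]? = some (a, b)) (h : 0 < count c.room a) :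
    ∃ c', Step prog c c' := by
  obtain ⟨i, rfl⟩ := exists_room_of_count_pos h
  exact ⟨_, v, i, b, instr, rfl⟩

lemma count_eq_zero_of_stuck (h : ¬∃ c', Step prog c c') (v : Fin n) (x : ℕ × ℕ)
    (instr : (prog v)[c.pc v]? = some x) : count c.room x.1 = 0 :=
  Nat.eq_zero_of_not_pos fun pos => h (exists_step instr pos)

end Counting

section PhaseOne

variable {N r : ℕ} {c : Config (N + 1) r}

/-- The programs of the first phase, leading from rooms in state `0` to rooms in state `1`: the
leader `0` turns all rooms from `0` to `1`, and then turns back the `r` rooms which each of the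
other prisoners turns from `1` to `2`. -/
def phaseOne (N r : ℕ) : Fin (N + 1) → Program :=
  Fin.cons (List.replicate r (0, 1) ++ List.replicate (N * r) (2, 1))
    fun _ => List.replicate r (1, 2)

lemma phaseOne_zero_getElem? {k : ℕ} {x : ℕ × ℕ} : (phaseOne N r 0)[k]? = some x ↔
    x = (0, 1) ∧ k < r ∨ (x = (2, 1) ∧ k - r < N * r) ∧ r ≤ k := by
  simp only [phaseOne, Fin.cons_zero, getElem?_replicate_append_eq_some,
    getElem?_replicate_eq_some]

lemma phaseOne_succ_getElem? {k : ℕ} {x : ℕ × ℕ} (v : Fin N) :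
    (phaseOne N r v.succ)[k]? = some x ↔ x = (1, 2) ∧ k < r := by
  simp only [phaseOne, Fin.cons_succ, getElem?_replicate_eq_some]

lemma length_phaseOne_zero : (phaseOne N r 0).length = r + N * r := by
  simp only [phaseOne, Fin.cons_zero, List.length_append, List.length_replicate]

lemma length_phaseOne_succ (v : Fin N) : (phaseOne N r v.succ).length = r := by
  simp only [phaseOne, Fin.cons_succ, List.length_replicate]

lemma phaseOne_count (h : Reachable (phaseOne N r) 0 ∅ c) :
    count c.room 0 + min (c.pc 0) r = r ∧
      count c.room 1 + ∑ v : Fin N, c.pc v.succ = c.pc 0 ∧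
      count c.room 2 + (c.pc 0 - r) = ∑ v : Fin N, c.pc v.succ := by
  have length_zero := h.pc_le_length 0
  have length_succ (v : Fin N) := (h.pc_le_length v.succ).trans_eq (length_phaseOne_succ v)
  rw [length_phaseOne_zero] at length_zero
  have zeros := h.count_room 0
  have ones := h.count_room 1
  have twos := h.count_room 2
  simp only [phaseOne, Fin.sum_univ_succ, Fin.cons_zero, Fin.cons_succ, List.take_append,
    List.take_replicate, List.length_replicate, List.countP_append, List.countP_replicate,
    decide_true, decide_false, Bool.false_eq_true, ↓reduceIte, OfNat.ofNat_ne_zero, one_ne_zero,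
    zero_ne_one, OfNat.ofNat_ne_one, OfNat.zero_ne_ofNat, OfNat.one_ne_ofNat,
    Finset.sum_const_zero, add_zero, zero_add, length_succ, inf_of_le_left] at zeros ones twos
  omega

lemma phaseOne_visited (h : Reachable (phaseOne N r) 0 ∅ c) {i : Fin r} (hi : c.room i ≠ 0) :
    (0, i) ∈ c.visited := by
  refine h.mem_visited (M := {0}ᶜ) (k := 0) (fun _ => not_not_intro rfl)
    (fun _ _ _ _ hk => absurd hk (Nat.succ_ne_zero _)) (fun c u i b _ _ hu instr _ => ?_)
    (Nat.zero_le _) hi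
  obtain ⟨u, rfl⟩ := Fin.exists_succ_eq.mpr hu
  have room_eq : c.room i = 1 := congrArg Prod.fst ((phaseOne_succ_getElem? u).mp instr).1
  exact room_eq.trans_ne one_ne_zero

lemma phaseOne_progress (h : Reachable (phaseOne N r) 0 ∅ c)
    (running : c.pc 0 < r + N * r) : ∃ c', Step (phaseOne N r) c c' := by
  obtain ⟨zeros, ones, twos⟩ := phaseOne_count h
  rcases lt_or_ge (c.pc 0) r with h0 | h0
  · exact exists_step (phaseOne_zero_getElem?.mpr (Or.inl ⟨rfl, h0⟩)) (by omega)
  rcases Nat.eq_zero_or_pos (count c.room 2) with none_two | some_two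
  · obtain ⟨v, -, hv⟩ : ∃ v ∈ Finset.univ, c.pc (Fin.succ v) < r := by
      refine Finset.exists_lt_of_sum_lt ?_
      simp only [Finset.sum_const, Finset.card_fin, smul_eq_mul]
      omega
    exact exists_step ((phaseOne_succ_getElem? v).mpr ⟨rfl, hv⟩) (by omega)
  · exact exists_step (phaseOne_zero_getElem?.mpr (Or.inr ⟨⟨rfl, by omega⟩, h0⟩)) some_two

lemma phaseOne_asleep (h : Reachable (phaseOne N r) 0 ∅ c) {v : Fin N} (hv : c.pc v.succ = r) :
    count c.room 0 = 0 := by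
  obtain ⟨zeros, ones, twos⟩ := phaseOne_count h
  have single := Finset.single_le_sum (f := fun v : Fin N => c.pc v.succ)
    (fun _ _ => Nat.zero_le _) (Finset.mem_univ v)
  simp only [hv] at single
  omega

lemma phaseOne_finished (h : Reachable (phaseOne N r) 0 ∅ c) (hc : c.pc 0 = r + N * r) :
    (∀ i, c.room i = 1) ∧ ∀ v : Fin N, c.pc v.succ = r := by
  obtain ⟨zeros, ones, twos⟩ := phaseOne_count h
  have bound : ∀ v ∈ Finset.univ, c.pc (Fin.succ v) ≤ r := fun v _ =>
    (h.pc_le_length v.succ).trans_eq (length_phaseOne_succ v)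
  have total : ∑ v : Fin N, c.pc v.succ = ∑ _v : Fin N, r := by
    have le := Finset.sum_le_sum bound
    simp only [Finset.sum_const, Finset.card_fin, smul_eq_mul] at le ⊢
    omega
  have all := (Finset.sum_eq_sum_iff_of_le bound).mp total
  refine ⟨room_eq_of_count_eq ?_, fun v => all v (Finset.mem_univ v)⟩
  simp only [Finset.sum_const, Finset.card_fin, smul_eq_mul] at total
  omega

lemma phaseOne_snd_le (N r : ℕ) (v : Fin (N + 1)) : ∀ x ∈ phaseOne N r v, x.2 ≤ 2 := by
  cases v using Fin.cases with
  | zero =>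
    intro x hx
    rcases List.mem_append.mp hx with hx | hx <;> simp [List.eq_of_mem_replicate hx]
  | succ v => simp [phaseOne]

theorem phaseOne_handover (hr : 1 ≤ r) (post : Fin (N + 1) → Program)
    (hpost : ∀ v ≠ 0, ∀ x ∈ (post v)[0]?, x.1 = 0) :
    Handover (phaseOne N r) post 0 0 ∅ 1
      fun V => (∀ i : Fin r, (0, i) ∈ V) ∧ ∀ v, ∃ i : Fin r, (v, i) ∈ V where
  progress c h running := phaseOne_progress h (running.trans_eq length_phaseOne_zero)
  asleep c h _ v hv0 hv x hx i := by
    obtain ⟨v, rfl⟩ := Fin.exists_succ_eq.mpr hv0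
    rw [hpost _ hv0 x hx]
    exact room_ne_of_count_eq_zero (phaseOne_asleep h (hv.trans (length_phaseOne_succ v))) i
  finished c h hc := by
    rw [length_phaseOne_zero] at hc
    obtain ⟨rooms, counters⟩ := phaseOne_finished h hc
    refine ⟨rooms, Fin.cases (hc.trans length_phaseOne_zero.symm) fun v =>
      (counters v).trans (length_phaseOne_succ v).symm, fun i =>
      phaseOne_visited h (by rw [rooms i]; exact one_ne_zero), Fin.cases ?_ fun v => ?_⟩
    · exact h.exists_visited (by omega)
    · exact h.exists_visited (by rw [counters v]; omega)

end PhaseOne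

section TwoRooms

variable {V : Set (Fin 4 × Fin 2)} {c : Config 4 2}

/-- The programs finishing the game with two rooms in state `1`. Prisoner `0` marks one of the
rooms with `0`; the others recognise it, and then `2` and `3` each announce in the second room,
by turning it from `1` to `2`, that they have visited both. -/
def twoRooms : Fin 4 → Program :=
  ![[(1, 0)], [(0, 0), (2, 1), (2, 1)], [(0, 0), (1, 2)], [(0, 0), (1, 2)]]

lemma twoRooms_marked (h : Reachable twoRooms 1 V c) : c = start 1 V ∨ c.pc 0 = 1 :=
  h.eq_start_or_pc_eq_one rfl (by simp [Fin.forall_fin_succ, twoRooms])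

lemma twoRooms_count (h : Reachable twoRooms 1 V c) :
    count c.room 0 = c.pc 0 ∧
      count c.room 1 + c.pc 0 + (c.pc 2 - 1) + (c.pc 3 - 1) = 2 + (c.pc 1 - 1) ∧
      count c.room 2 + (c.pc 1 - 1) = (c.pc 2 - 1) + (c.pc 3 - 1) := by
  have l0 : c.pc 0 ≤ 1 := h.pc_le_length 0
  have l1 : c.pc 1 ≤ 3 := h.pc_le_length 1
  have l2 : c.pc 2 ≤ 2 := h.pc_le_length 2
  have l3 : c.pc 3 ≤ 2 := h.pc_le_length 3
  have zeros := h.count_room 0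
  have ones := h.count_room 1
  have twos := h.count_room 2
  simp only [twoRooms, Fin.sum_univ_four, Matrix.cons_val, countP_take_cons, List.take_nil,
    List.countP_nil, decide_true, decide_false, Bool.false_eq_true, ↓reduceIte, one_ne_zero,
    OfNat.ofNat_ne_zero, zero_ne_one, OfNat.ofNat_ne_one, OfNat.one_ne_ofNat, OfNat.zero_ne_ofNat,
    add_zero, zero_add] at zeros ones twos
  omega

lemma twoRooms_progress (h : Reachable twoRooms 1 V c) (running : c.pc 1 < 3) :
    ∃ c', Step twoRooms c c' := by
  rcases twoRooms_marked h with rfl | marked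
  · exact ⟨_, 0, 0, 0, rfl, rfl⟩
  by_contra stuck
  have idle0 := count_eq_zero_of_stuck stuck 0
  have idle1 := count_eq_zero_of_stuck stuck 1
  have idle2 := count_eq_zero_of_stuck stuck 2
  have idle3 := count_eq_zero_of_stuck stuck 3
  simp only [twoRooms, Matrix.cons_val, getElem?_cons_eq_some, List.getElem?_nil, reduceCtorEq,
    false_and, or_false, and_imp, or_and_right, or_imp, forall_and, forall_eq]
    at idle0 idle1 idle2 idle3
  obtain ⟨zeros, ones, twos⟩ := twoRooms_count h
  omega

lemma twoRooms_mem_visited_of_room_eq_zero (h : Reachable twoRooms 1 V c) {v : Fin 4} (hv : v ≠ 0)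
    (hc : 1 ≤ c.pc v) {i : Fin 2} (hi : c.room i = 0) : (v, i) ∈ c.visited := by
  have first : ∀ v ≠ 0, (twoRooms v)[0]? = some (0, 0) := by decide
  have preserved : ∀ v ≠ 0, ∀ x ∈ twoRooms v, x.2 = 0 → x.1 = 0 := by decide
  refine h.mem_visited (M := {0}) (by simp) (fun c i b reach hk instr j hj => ?_)
    (fun c u i b reach hk _ instr hb => ?_) hc hi
  · have hpc : c.pc v = 0 := by omega
    obtain ⟨-, rfl⟩ : 0 = c.room i ∧ 0 = b := by
      simpa only [hpc, first v hv, Option.some.injEq, Prod.mk.injEq] using instr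
    have reach' : Reachable twoRooms 1 V (c.act v i 0) := reach.tail ⟨v, i, 0, instr, rfl⟩
    have unique : count (c.act v i 0).room 0 ≤ 1 :=
      (twoRooms_count reach').1.trans_le (reach'.pc_le_length 0)
    rw [eq_of_count_le_one unique hj (Function.update_self i 0 c.room)]
    exact Set.mem_insert _ _
  · have marked : c.pc 0 = 1 := pc_eq_one_of_pos (twoRooms_marked reach) hk
    have hu : u ≠ 0 := by
      rintro rfl
      simp [marked, twoRooms] at instr
    exact preserved u hu _ (List.mem_of_getElem? instr) hb

lemma twoRooms_mem_visited (h : Reachable twoRooms 1 V c) {v : Fin 4} (hv : v ≠ 0)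
    (hc : 2 ≤ c.pc v) (i : Fin 2) : (v, i) ∈ c.visited := by
  have second : ∀ v ≠ 0, ∀ x ∈ (twoRooms v)[1]?, x.1 ≠ 0 := by decide
  refine h.mem_visited (M := Set.univ) (by simp) (fun c i b reach hk instr j _ => ?_)
    (fun _ _ _ _ _ _ _ _ _ => Set.mem_univ _) hc (Set.mem_univ _)
  have hpc : c.pc v = 1 := by omega
  have marked : c.pc 0 = 1 := pc_eq_one_of_pos (twoRooms_marked reach) hpc.ge
  obtain ⟨m, hm⟩ := exists_room_of_count_pos
    (Nat.one_pos.trans_eq (marked.symm.trans (twoRooms_count reach).1.symm))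
  have hi : c.room i ≠ 0 := second v hv _ (hpc ▸ instr)
  by_cases hij : j = i
  · exact Or.inl (hij ▸ rfl)
  · have hjm : j = m := by
      have him : m ≠ i := fun h => hi (h ▸ hm)
      omega
    exact Or.inr (hjm ▸ twoRooms_mem_visited_of_room_eq_zero reach hv hpc.ge hm)

lemma twoRooms_snd_le : ∀ v, ∀ x ∈ twoRooms v, x.2 ≤ 2 := by
  decide

theorem twoRooms_solves (hV : ∀ i, (0, i) ∈ V) : Solves twoRooms 1 1 V := by
  refine fun c h => ⟨fun hc => ?_, twoRooms_progress h⟩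
  have hc : c.pc 1 = 3 := hc
  obtain ⟨-, -, twos⟩ := twoRooms_count h
  have l2 : c.pc 2 ≤ 2 := h.pc_le_length 2
  have l3 : c.pc 3 ≤ 2 := h.pc_le_length 3
  have pc_ge : ∀ v ≠ 0, 2 ≤ c.pc v := by
    intro v hv
    obtain rfl | rfl | rfl : v = 1 ∨ v = 2 ∨ v = 3 := by omega
    all_goals omega
  rintro ⟨v, i⟩
  by_cases hv : v = 0
  · exact h.visited_subset (hv ▸ hV i)
  · exact twoRooms_mem_visited h hv (pc_ge v hv) i

end TwoRooms

section PhaseTwo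

variable {r : ℕ} {V : Set (Fin 4 × Fin r)} {c : Config 4 r}

/-- The programs of the second phase, leading from rooms in state `1` to rooms in state `1`.
Prisoner `0` marks a room with `0`, and only in that room do the others start: having recognised
it, the leader `1` waits for `2` and `3` to turn it from `0` to `2`, then turns all rooms from `0`
to `2`, which `2` and `3` have turned from `1` to `0`, and finally turns all rooms back to `1`. -/
def phaseTwo (r : ℕ) : Fin 4 → Program :=
  ![[(1, 0)],
    (0, 0) :: (List.replicate 2 (2, 0) ++ (List.replicate r (0, 2) ++
      (List.replicate r (2, 1) ++ List.replicate (3 * r + 1) (0, 1)))),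
    (0, 2) :: List.replicate (2 * r) (1, 0),
    (0, 2) :: List.replicate (2 * r) (1, 0)]

lemma length_phaseTwo (r : ℕ) (v : Fin 4) :
    (phaseTwo r v).length = ![1, 5 * r + 4, 2 * r + 1, 2 * r + 1] v := by
  have length_one : (phaseTwo r 1).length = 2 + (r + (r + (3 * r + 1))) + 1 := by
    simp [phaseTwo, -List.reduceReplicate]
  fin_cases v
  · rfl
  · exact length_one.trans (by simp; ring)
  all_goals simp [phaseTwo]

lemma phaseTwo_one_getElem? {k : ℕ} {x : ℕ × ℕ} : (phaseTwo r 1)[k]? = some x ↔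
    x = (0, 0) ∧ k = 0 ∨ x = (2, 0) ∧ 1 ≤ k ∧ k < 3 ∨ x = (0, 2) ∧ 3 ≤ k ∧ k < 3 + r ∨
      x = (2, 1) ∧ 3 + r ≤ k ∧ k < 3 + 2 * r ∨ x = (0, 1) ∧ 3 + 2 * r ≤ k ∧ k < 5 * r + 4 := by
  simp only [phaseTwo, Matrix.cons_val_one, Matrix.cons_val_zero, getElem?_cons_eq_some,
    getElem?_replicate_append_eq_some, getElem?_replicate_eq_some]
  grind

lemma phaseTwo_getElem?_of_one_lt {v : Fin 4} (hv : 1 < v) {k : ℕ} {x : ℕ × ℕ} :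
    (phaseTwo r v)[k]? = some x ↔ x = (0, 2) ∧ k = 0 ∨ x = (1, 0) ∧ 1 ≤ k ∧ k < 2 * r + 1 := by
  have same : phaseTwo r v = (0, 2) :: List.replicate (2 * r) (1, 0) := by
    fin_cases v <;> first | rfl | exact absurd hv (by decide)
  rw [same, getElem?_cons_eq_some, getElem?_replicate_eq_some]
  grind

lemma phaseTwo_marked (h : Reachable (phaseTwo r) 1 V c) : c = start 1 V ∨ c.pc 0 = 1 :=
  h.eq_start_or_pc_eq_one rfl (by simp [Fin.forall_fin_succ, phaseTwo])

lemma phaseTwo_count (h : Reachable (phaseTwo r) 1 V c) :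
    count c.room 0 + min (c.pc 2) 1 + min (c.pc 3) 1 + min (c.pc 1 - 3) r +
        (c.pc 1 - (3 + 2 * r)) = c.pc 0 + min (c.pc 1 - 1) 2 + (c.pc 2 - 1) + (c.pc 3 - 1) ∧
      count c.room 1 + c.pc 0 + (c.pc 2 - 1) + (c.pc 3 - 1) =
        r + min (c.pc 1 - (3 + r)) r + (c.pc 1 - (3 + 2 * r)) ∧
      count c.room 2 + min (c.pc 1 - 1) 2 + min (c.pc 1 - (3 + r)) r =
        min (c.pc 1 - 3) r + min (c.pc 2) 1 + min (c.pc 3) 1 := by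
  have l0 : min (c.pc 0) 1 = c.pc 0 := min_eq_left (h.pc_le_length 0)
  have l1 : min (c.pc 1 - (3 + 2 * r)) (3 * r + 1) = c.pc 1 - (3 + 2 * r) := by
    have le_length : c.pc 1 ≤ 5 * r + 4 := (h.pc_le_length 1).trans_eq (length_phaseTwo r 1)
    omega
  have l2 : min (c.pc 2 - 1) (2 * r) = c.pc 2 - 1 :=
    min_eq_left (Nat.sub_le_of_le_add ((h.pc_le_length 2).trans_eq (length_phaseTwo r 2)))
  have l3 : min (c.pc 3 - 1) (2 * r) = c.pc 3 - 1 :=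
    min_eq_left (Nat.sub_le_of_le_add ((h.pc_le_length 3).trans_eq (length_phaseTwo r 3)))
  have zeros := h.count_room 0
  have ones := h.count_room 1
  have twos := h.count_room 2
  simp only [phaseTwo, Fin.sum_univ_four, Matrix.cons_val, countP_take_cons, List.take_nil,
    List.take_append, List.take_replicate, List.length_replicate, List.countP_nil,
    List.countP_append, List.countP_replicate, decide_true, decide_false, Bool.false_eq_true,
    ↓reduceIte, one_ne_zero, OfNat.ofNat_ne_zero, zero_ne_one, OfNat.ofNat_ne_one,
    OfNat.one_ne_ofNat, OfNat.zero_ne_ofNat, add_zero, zero_add, Nat.sub_sub, Nat.reduceAdd,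
    add_assoc 3 r r, ← two_mul, l0, l1, l2, l3] at zeros ones twos
  refine ⟨?_, ?_, ?_⟩ <;> linarith

lemma phaseTwo_announced (h : Reachable (phaseTwo r) 1 V c) (hc : 3 ≤ c.pc 1) {v : Fin 4}
    (hv : 1 < v) : 1 ≤ c.pc v := by
  induction h using Reachable.induction_act with
  | start => exact absurd hc (by simp [start])
  | act c u i b reach instr ih =>
    rcases le_or_gt 3 (c.pc 1) with hc' | hc'
    · exact (ih hc').trans ((le_update_iff.mpr ⟨Nat.le_succ _, fun _ _ => le_rfl⟩ :
        c.pc ≤ (c.act u i b).pc) v)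
    · have le_succ : (c.act u i b).pc 1 ≤ c.pc 1 + 1 := by
        by_cases hu : 1 = u
        · subst hu
          exact (Function.update_self 1 _ c.pc).le
        · exact (Function.update_of_ne hu _ c.pc).trans_le (Nat.le_succ _)
      obtain ⟨-, -, twos⟩ := phaseTwo_count (reach.tail ⟨u, i, b, instr, rfl⟩)
      rcases (by omega : v = 2 ∨ v = 3) with rfl | rfl <;> omega

lemma phaseTwo_count_of_three_le (h : Reachable (phaseTwo r) 1 V c) (hc : 3 ≤ c.pc 1) :
    count c.room 0 + 1 + min (c.pc 1 - 3) r + (c.pc 1 - (3 + 2 * r)) = c.pc 2 + c.pc 3 ∧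
      count c.room 1 + c.pc 2 + c.pc 3 =
        r + 1 + min (c.pc 1 - (3 + r)) r + (c.pc 1 - (3 + 2 * r)) ∧
      count c.room 2 + min (c.pc 1 - (3 + r)) r = min (c.pc 1 - 3) r := by
  obtain ⟨zeros, ones, twos⟩ := phaseTwo_count h
  have h2 : 1 ≤ c.pc 2 := phaseTwo_announced h hc (by decide)
  have h3 : 1 ≤ c.pc 3 := phaseTwo_announced h hc (by decide)
  have marked : c.pc 0 = 1 := pc_eq_one_of_pos (phaseTwo_marked h) (Nat.zero_lt_of_lt hc)
  have m1 : min (c.pc 1 - 1) 2 = 2 := by omega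
  rw [min_eq_right h2, min_eq_right h3, m1] at zeros twos
  refine ⟨?_, ?_, ?_⟩ <;> omega

lemma phaseTwo_mem_visited_of_room_eq_two (h : Reachable (phaseTwo r) 1 V c) (hc : 3 ≤ c.pc 1)
    {i : Fin r} (hi : c.room i = 2) : (1, i) ∈ c.visited := by
  refine h.mem_visited (M := {2}) (by simp) (fun c i b reach hk instr j hj => ?_)
    (fun c u i b reach hk hu instr hb => ?_) hc hi
  · have reach' := reach.tail ⟨1, i, b, instr, rfl⟩
    have pc_eq : (c.act 1 i b).pc 1 = 3 := by simpa [Config.act] using hk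
    obtain ⟨-, -, twos⟩ := phaseTwo_count reach'
    exact absurd hj (room_ne_of_count_eq_zero (by omega) j)
  · rw [Set.mem_singleton_iff] at hb
    subst hb
    rcases (by omega : u = 0 ∨ 1 < u) with rfl | hu
    · exact absurd (List.mem_of_getElem? instr) (by simp [phaseTwo])
    · rcases (phaseTwo_getElem?_of_one_lt hu).mp instr with ⟨-, first⟩ | ⟨eq, -⟩
      · exact absurd first (Nat.pos_iff_ne_zero.mp (phaseTwo_announced reach hk hu))
      · exact absurd (congrArg Prod.snd eq) two_ne_zero

lemma phaseTwo_mem_visited (h : Reachable (phaseTwo r) 1 V c) (hc : 3 + r ≤ c.pc 1) (i : Fin r) :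
    (1, i) ∈ c.visited := by
  refine h.mem_visited (M := Set.univ) (by simp) (fun c i b reach hk instr j _ => ?_)
    (fun _ _ _ _ _ _ _ _ _ => Set.mem_univ _) hc (Set.mem_univ _)
  have reach' := reach.tail ⟨1, i, b, instr, rfl⟩
  have pc_eq : (c.act 1 i b).pc 1 = 3 + r := by simpa [Config.act] using hk
  obtain ⟨-, -, twos⟩ := phaseTwo_count_of_three_le reach' (by omega)
  exact phaseTwo_mem_visited_of_room_eq_two reach' (by omega) (room_eq_of_count_eq (by omega) j)

lemma phaseTwo_progress_of_three_le (h : Reachable (phaseTwo r) 1 V c) (hc : 3 ≤ c.pc 1)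
    (running : c.pc 1 < 5 * r + 4) : ∃ c', Step (phaseTwo r) c c' := by
  by_contra stuck
  have idle := count_eq_zero_of_stuck stuck
  have h2 : 1 ≤ c.pc 2 := phaseTwo_announced h hc (by decide)
  have h3 : 1 ≤ c.pc 3 := phaseTwo_announced h hc (by decide)
  have idle2 (h2' : c.pc 2 < 2 * r + 1) : count c.room 1 = 0 :=
    idle 2 (1, 0) ((phaseTwo_getElem?_of_one_lt (by decide)).mpr (Or.inr ⟨rfl, h2, h2'⟩))
  have idle3 (h3' : c.pc 3 < 2 * r + 1) : count c.room 1 = 0 :=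
    idle 3 (1, 0) ((phaseTwo_getElem?_of_one_lt (by decide)).mpr (Or.inr ⟨rfl, h3, h3'⟩))
  obtain ⟨zeros, ones, twos⟩ := phaseTwo_count_of_three_le h hc
  rcases lt_or_ge (c.pc 1) (3 + r) with first | second
  · have none_zero : count c.room 0 = 0 :=
      idle 1 (0, 2) (phaseTwo_one_getElem?.mpr (.inr (.inr (.inl ⟨rfl, hc, first⟩))))
    omega
  rcases lt_or_ge (c.pc 1) (3 + 2 * r) with second' | third
  · have none_two : count c.room 2 = 0 :=
      idle 1 (2, 1) (phaseTwo_one_getElem?.mpr (.inr (.inr (.inr (.inl ⟨rfl, second, second'⟩)))))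
    omega
  · have none_zero : count c.room 0 = 0 :=
      idle 1 (0, 1) (phaseTwo_one_getElem?.mpr (.inr (.inr (.inr (.inr ⟨rfl, third, running⟩)))))
    omega

lemma phaseTwo_progress (hr : 3 ≤ r) (h : Reachable (phaseTwo r) 1 V c)
    (running : c.pc 1 < 5 * r + 4) : ∃ c', Step (phaseTwo r) c c' := by
  rcases phaseTwo_marked h with rfl | marked
  · exact ⟨_, 0, ⟨0, by omega⟩, 0, rfl, rfl⟩
  rcases le_or_gt 3 (c.pc 1) with late | early
  · exact phaseTwo_progress_of_three_le h late running
  by_contra stuck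
  have idle := count_eq_zero_of_stuck stuck
  have idle2 := fun x => idle 2 x ∘ (phaseTwo_getElem?_of_one_lt (by decide)).mpr
  have idle3 := fun x => idle 3 x ∘ (phaseTwo_getElem?_of_one_lt (by decide)).mpr
  simp only [or_imp, forall_and, and_imp, forall_eq] at idle2 idle3
  obtain ⟨zeros, ones, twos⟩ := phaseTwo_count h
  rcases Nat.eq_zero_or_pos (c.pc 1) with first | pos
  · have none_zero : count c.room 0 = 0 :=
      idle 1 (0, 0) (phaseTwo_one_getElem?.mpr (.inl ⟨rfl, first⟩))
    omega
  · have none_two : count c.room 2 = 0 :=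
      idle 1 (2, 0) (phaseTwo_one_getElem?.mpr (.inr (.inl ⟨rfl, pos, early⟩)))
    omega

lemma phaseTwo_asleep (h : Reachable (phaseTwo r) 1 V c)
    (hc : c.pc 2 = 2 * r + 1 ∨ c.pc 3 = 2 * r + 1) : count c.room 2 = 0 := by
  rcases le_or_gt 3 (c.pc 1) with late | early
  · obtain ⟨-, ones, twos⟩ := phaseTwo_count_of_three_le h late
    have h2 : 1 ≤ c.pc 2 := phaseTwo_announced h late (by decide)
    have h3 : 1 ≤ c.pc 3 := phaseTwo_announced h late (by decide)
    omega
  · obtain ⟨zeros, ones, twos⟩ := phaseTwo_count h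
    omega

lemma phaseTwo_finished (h : Reachable (phaseTwo r) 1 V c) (hc : c.pc 1 = 5 * r + 4) :
    (∀ i, c.room i = 1) ∧ ∀ v, c.pc v = (phaseTwo r v).length := by
  obtain ⟨zeros, ones, twos⟩ := phaseTwo_count_of_three_le h (by omega)
  have marked : c.pc 0 = 1 := pc_eq_one_of_pos (phaseTwo_marked h) (u := 1) (by omega)
  have l2 : c.pc 2 ≤ 2 * r + 1 := (h.pc_le_length 2).trans_eq (length_phaseTwo r 2)
  have l3 : c.pc 3 ≤ 2 * r + 1 := (h.pc_le_length 3).trans_eq (length_phaseTwo r 3)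
  refine ⟨room_eq_of_count_eq (by omega), fun v => ?_⟩
  rw [length_phaseTwo]
  fin_cases v
  · exact marked
  · exact hc
  · exact (by omega : c.pc 2 = 2 * r + 1)
  · exact (by omega : c.pc 3 = 2 * r + 1)

lemma phaseTwo_snd_le (r : ℕ) (v : Fin 4) : ∀ x ∈ phaseTwo r v, x.2 ≤ 2 := by
  fin_cases v <;> simp [phaseTwo, or_imp, forall_and]

theorem phaseTwo_handover (hr : 3 ≤ r) (hV : ∀ i, (0, i) ∈ V) (post : Fin 4 → Program)
    (hpost0 : post 0 = []) (hpost : ∀ v, ∀ x ∈ (post v)[0]?, v ≠ 1 → x.1 = 2) :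
    Handover (phaseTwo r) post 1 1 V 1 fun V' => ∀ i : Fin r, (0, i) ∈ V' ∧ (1, i) ∈ V' where
  progress c h running := phaseTwo_progress hr h (running.trans_eq (length_phaseTwo r 1))
  asleep c h _ v hv hc x hx i := by
    rw [hpost v x hx hv]
    refine room_ne_of_count_eq_zero (phaseTwo_asleep h ?_) i
    rw [length_phaseTwo] at hc
    fin_cases v
    · simp [hpost0] at hx
    · exact absurd rfl hv
    · exact Or.inl hc
    · exact Or.inr hc
  finished c h hc := by
    rw [length_phaseTwo] at hc
    obtain ⟨rooms, counters⟩ := phaseTwo_finished h hc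
    refine ⟨rooms, counters, fun i => ⟨h.visited_subset (hV i), phaseTwo_mem_visited h ?_ i⟩⟩
    exact (by omega : 3 + r ≤ 5 * r + 4).trans_eq hc.symm

end PhaseTwo

section Endgame

variable {r : ℕ} {V : Set (Fin 4 × Fin r)} {c : Config 4 r}

/-- The programs finishing the game with all rooms in state `1`, once `0` and `1` have visited all
of them. Prisoner `1` marks a room with `2`, in which the others start. Then `2` turns all other
rooms from `1` to `0`, and `3` turns these from `0` to `2`. -/
def endgame (r : ℕ) : Fin 4 → Program :=
  ![[], [(1, 2)], (2, 2) :: List.replicate (r - 1) (1, 0), (2, 2) :: List.replicate (r - 1) (0, 2)]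

lemma length_endgame (r : ℕ) (v : Fin 4) :
    (endgame r v).length = ![0, 1, r - 1 + 1, r - 1 + 1] v := by
  fin_cases v <;> simp [endgame]

lemma endgame_marked (h : Reachable (endgame r) 1 V c) : c = start 1 V ∨ c.pc 1 = 1 :=
  h.eq_start_or_pc_eq_one rfl (by simp [Fin.forall_fin_succ, endgame])

lemma endgame_count (h : Reachable (endgame r) 1 V c) :
    count c.room 0 + (c.pc 3 - 1) = c.pc 2 - 1 ∧
      count c.room 1 + c.pc 1 + (c.pc 2 - 1) = r ∧
      count c.room 2 = c.pc 1 + (c.pc 3 - 1) := by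
  have l1 : c.pc 1 ≤ 1 := h.pc_le_length 1
  have l2 : c.pc 2 ≤ r - 1 + 1 := (h.pc_le_length 2).trans_eq (length_endgame r 2)
  have l3 : c.pc 3 ≤ r - 1 + 1 := (h.pc_le_length 3).trans_eq (length_endgame r 3)
  have zeros := h.count_room 0
  have ones := h.count_room 1
  have twos := h.count_room 2
  simp only [endgame, Fin.sum_univ_four, Matrix.cons_val, countP_take_cons, List.take_nil,
    List.take_replicate, List.countP_nil, List.countP_replicate, decide_true, decide_false,
    Bool.false_eq_true, ↓reduceIte, one_ne_zero, OfNat.ofNat_ne_zero, zero_ne_one,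
    OfNat.ofNat_ne_one, OfNat.one_ne_ofNat, OfNat.zero_ne_ofNat, add_zero, zero_add]
    at zeros ones twos
  omega

lemma endgame_progress (h : Reachable (endgame r) 1 V c) (running : c.pc 3 < r) :
    ∃ c', Step (endgame r) c c' := by
  rcases endgame_marked h with rfl | marked
  · exact ⟨_, 1, ⟨0, by omega⟩, 2, rfl, rfl⟩
  by_contra stuck
  have idle2 := count_eq_zero_of_stuck stuck 2
  have idle3 := count_eq_zero_of_stuck stuck 3
  simp only [endgame, Matrix.cons_val, getElem?_cons_eq_some, getElem?_replicate_eq_some, or_imp,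
    and_imp, forall_and, forall_eq] at idle2 idle3
  obtain ⟨zeros, ones, twos⟩ := endgame_count h
  omega

lemma endgame_two_mem_visited (h : Reachable (endgame r) 1 V c) (hc : 1 ≤ c.pc 2) {i : Fin r}
    (hi : c.room i = 0 ∨ c.room i = 2) : (2, i) ∈ c.visited := by
  refine h.mem_visited (M := {0, 2}) (by simp) (fun c i b reach hk instr j hj => ?_)
    (fun c u i b reach hk hu instr _ => ?_) hc hi
  · have reach' : Reachable (endgame r) 1 V (c.act 2 i b) := reach.tail ⟨2, i, b, instr, rfl⟩
    have hpc : c.pc 2 = 0 := by omega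
    obtain rfl : 2 = b := congrArg Prod.snd (Option.some.inj (hpc ▸ instr))
    have pc_eq : (c.act 2 i 2).pc 2 = 1 := by simpa [Config.act] using hk
    obtain ⟨zeros, -, twos⟩ := endgame_count reach'
    have l1 : (c.act 2 i 2).pc 1 ≤ 1 := reach'.pc_le_length 1
    rcases hj with hj | hj
    · exact absurd hj (room_ne_of_count_eq_zero (by omega) j)
    · rw [eq_of_count_le_one (by omega) hj (Function.update_self i 2 c.room)]
      exact Set.mem_insert _ _
  · have marked : c.pc 1 = 1 := pc_eq_one_of_pos (endgame_marked reach) hk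
    have mem := List.mem_of_getElem? instr
    fin_cases u
    · simp [endgame] at mem
    · simp [marked, endgame] at instr
    · exact absurd rfl hu
    · simp only [endgame, Fin.reduceFinMk, Matrix.cons_val, List.mem_cons,
        List.mem_replicate] at mem
      grind

lemma endgame_three_mem_visited (h : Reachable (endgame r) 1 V c) (hc : 1 ≤ c.pc 3) {i : Fin r}
    (hi : c.room i = 2) : (3, i) ∈ c.visited := by
  refine h.mem_visited (M := {2}) (by simp) (fun c i b reach hk instr j hj => ?_)
    (fun c u i b reach hk hu instr hb => ?_) hc hi
  · have reach' : Reachable (endgame r) 1 V (c.act 3 i b) := reach.tail ⟨3, i, b, instr, rfl⟩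
    have hpc : c.pc 3 = 0 := by omega
    obtain rfl : 2 = b := congrArg Prod.snd (Option.some.inj (hpc ▸ instr))
    have pc_eq : (c.act 3 i 2).pc 3 = 1 := by simpa [Config.act] using hk
    obtain ⟨-, -, twos⟩ := endgame_count reach'
    have l1 : (c.act 3 i 2).pc 1 ≤ 1 := reach'.pc_le_length 1
    rw [eq_of_count_le_one (by omega) hj (Function.update_self i 2 c.room)]
    exact Set.mem_insert _ _
  · have marked : c.pc 1 = 1 := pc_eq_one_of_pos (endgame_marked reach) hk
    have mem := List.mem_of_getElem? instr
    fin_cases u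
    · simp [endgame] at mem
    · simp [marked, endgame] at instr
    · simp only [endgame, Fin.reduceFinMk, Matrix.cons_val, List.mem_cons,
        List.mem_replicate] at mem
      grind
    · exact absurd rfl hu

lemma endgame_snd_le (r : ℕ) (v : Fin 4) : ∀ x ∈ endgame r v, x.2 ≤ 2 := by
  fin_cases v <;> simp [endgame]

theorem endgame_solves (hr : 2 ≤ r) (hV : ∀ i, (0, i) ∈ V ∧ (1, i) ∈ V) :
    Solves (endgame r) 3 1 V := by
  have length_three : (endgame r 3).length = r := (length_endgame r 3).trans (by simp; omega)
  refine fun c h => ⟨fun hc => ?_, fun running =>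
    endgame_progress h (running.trans_eq length_three)⟩
  rw [length_three] at hc
  have marked : c.pc 1 = 1 := pc_eq_one_of_pos (endgame_marked h) (u := 3) (by omega)
  obtain ⟨zeros, ones, twos⟩ := endgame_count h
  have rooms := room_eq_of_count_eq (R := c.room) (x := 2) (by omega)
  rintro ⟨v, i⟩
  fin_cases v
  · exact h.visited_subset (hV i).1
  · exact h.visited_subset (hV i).2
  · exact endgame_two_mem_visited h (by omega) (.inr (rooms i))
  · exact endgame_three_mem_visited h (by omega) (rooms i)

end Endgame

section FourPrisoners

variable {q : ℕ}

lemma hasWinningStrategy_four_of_one_room (hq : 3 ≤ q) : HasWinningStrategy 4 1 q := by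
  have handover := phaseOne_handover (N := 3) le_rfl (fun _ => []) (by simp)
  refine (handover.solves ?_).hasWinningStrategy ?_
  · rintro V ⟨_, visits⟩ ⟨v, i⟩
    obtain ⟨j, hj⟩ := visits v
    rwa [Subsingleton.elim i j]
  · exact fun v x hx => (phaseOne_snd_le 3 _ v x hx).trans_lt hq

lemma hasWinningStrategy_four_of_two_rooms (hq : 3 ≤ q) : HasWinningStrategy 4 2 q := by
  have handover := phaseOne_handover (N := 3) one_le_two twoRooms (by decide)
  refine (handover.solves_append (fun V visits => twoRooms_solves visits.1)
    (List.cons_ne_nil _ _)).hasWinningStrategy ?_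
  simp only [List.mem_append]
  rintro v x (hx | hx)
  exacts [(phaseOne_snd_le 3 _ v x hx).trans_lt hq, (twoRooms_snd_le v x hx).trans_lt hq]

lemma hasWinningStrategy_four_of_three_le {r : ℕ} (hr : 3 ≤ r) (hq : 3 ≤ q) :
    HasWinningStrategy 4 r q := by
  have rest (V : Set (Fin 4 × Fin r)) (hV : ∀ i, (0, i) ∈ V) :
      Solves (fun v => phaseTwo r v ++ endgame r v) 3 1 V :=
    (phaseTwo_handover hr hV (endgame r) rfl (by simp [Fin.forall_fin_succ, endgame])).solves_append
      (fun V' visits => endgame_solves (Nat.le_of_lt hr) visits) (List.cons_ne_nil _ _)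
  refine ((phaseOne_handover (N := 3) (by omega) _ ?_).solves_append
    (fun V visits => rest V visits.1) (List.cons_ne_nil _ _)).hasWinningStrategy ?_
  · simp [Fin.forall_fin_succ, phaseTwo]
  · simp only [List.mem_append]
    rintro v x (hx | hx | hx)
    exacts [(phaseOne_snd_le 3 _ v x hx).trans_lt hq, (phaseTwo_snd_le r v x hx).trans_lt hq,
      (endgame_snd_le r v x hx).trans_lt hq]

end FourPrisoners

end PrisonersGame

open PrisonersGame in
/-- For `1 ≤ n ≤ 4` prisoners, any number of rooms `r ≥ 1` and any number of
states `q ≥ 3`, the prisoners have a winning strategy. -/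
theorem winning_strategy_up_to_four (n r q : ℕ) (hn1 : 1 ≤ n) (hn4 : n ≤ 4)
    (hr : 1 ≤ r) (hq : 3 ≤ q) : HasWinningStrategy n r q := by
  refine .of_le hn1 hn4 ?_
  obtain rfl | rfl | hr3 : r = 1 ∨ r = 2 ∨ 3 ≤ r := by omega
  · exact hasWinningStrategy_four_of_one_room hq
  · exact hasWinningStrategy_four_of_two_rooms hq
  · exact hasWinningStrategy_four_of_three_le hr3 hq
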